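/- For every complex number q with |q| < 1, the sum over all nonnegative integers j of q^(2j^2+2j) · (-q^(2j+1); q)_∞ / ((q^2; q^2)_j) equals the product over all positive integers j with j not congruent to 0, 2, or -2 modulo 7 of 1/(1 - q^j). -/

import Mathlib

/-- The finite q-Pochhammer symbol `(a; q)_n = ∏_{h=0}^{n-1} (1 - a q^h)`. -/
noncomputable def qPoch (a q : ℂ) (n : ℕ) : ℂ := ∏ h ∈ Finset.range n, (1 - a * q ^ h)

/-- The infinite q-Pochhammer symbol `(a; q)_∞ = ∏_{h=0}^{∞} (1 - a q^h)`. -/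
noncomputable def qPochInf (a q : ℂ) : ℂ := ∏' h : ℕ, (1 - a * q ^ h)

/-!
Both sides are embedded in functions of a further variable `x`. Selberg's well-poised series give,
for each `k`, functions `f 0 = 0, f 1, …, f k` with
`f (i + 1) x = f i x + (1 - x q) (x q)^i f (k - i) (x q)`, and such a family is determined by its
continuity and its values at `x = 0`: the equations express the values at `x` through those at
`x q`, with constants whose infinite product along `x, x q, x q², …` converges. For `k = 3`,
suitable specialisations of the Rogers–Selberg sum with two free parameters solve the same system.
At `x = 1` the identity thus becomes the evaluation of a theta series, that is, the Jacobi triple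
product.
-/

namespace RogersSelberg

open Filter Topology

variable {q : ℂ}

/-! ### The q-Pochhammer symbols -/

lemma qPoch_zero (a q : ℂ) : qPoch a q 0 = 1 := Finset.prod_range_zero _

lemma qPoch_succ (a q : ℂ) (n : ℕ) : qPoch a q (n + 1) = qPoch a q n * (1 - a * q ^ n) :=
  Finset.prod_range_succ _ _

lemma qPoch_succ' (a q : ℂ) (n : ℕ) : qPoch a q (n + 1) = (1 - a) * qPoch (a * q) q n := by
  simp only [qPoch, Finset.prod_range_succ', pow_zero, mul_one, pow_succ', mul_assoc]
  exact mul_comm _ _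

lemma one_sub_mul_pow_ne_zero {a : ℂ} (ha : ‖a‖ < 1) (hq : ‖q‖ < 1) (n : ℕ) :
    1 - a * q ^ n ≠ 0 := by
  refine sub_ne_zero.mpr fun h => ?_
  have : ‖a * q ^ n‖ < 1 := by
    rw [norm_mul, norm_pow]
    exact mul_lt_one_of_nonneg_of_lt_one_left (norm_nonneg a) ha
      (pow_le_one₀ (norm_nonneg q) hq.le)
  rw [← h, norm_one] at this
  exact this.false

lemma qPoch_ne_zero {a : ℂ} (ha : ‖a‖ < 1) (hq : ‖q‖ < 1) (n : ℕ) : qPoch a q n ≠ 0 :=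
  Finset.prod_ne_zero_iff.mpr fun h _ => one_sub_mul_pow_ne_zero ha hq h

lemma summable_norm_neg_mul_pow (a : ℂ) (hq : ‖q‖ < 1) :
    Summable fun h : ℕ => ‖-(a * q ^ h)‖ := by
  simp only [norm_neg, norm_mul, norm_pow]
  exact (summable_geometric_of_lt_one (norm_nonneg _) hq).mul_left _

lemma multipliable_one_sub_mul_pow (a : ℂ) (hq : ‖q‖ < 1) :
    Multipliable fun h : ℕ => 1 - a * q ^ h := by
  simpa only [sub_eq_add_neg] using
    multipliable_one_add_of_summable (summable_norm_neg_mul_pow a hq)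

lemma tendsto_qPoch (a : ℂ) (hq : ‖q‖ < 1) :
    Tendsto (qPoch a q) atTop (𝓝 (qPochInf a q)) :=
  (multipliable_one_sub_mul_pow a hq).tendsto_prod_tprod_nat

lemma qPochInf_zero (q : ℂ) : qPochInf 0 q = 1 := by simp [qPochInf]

lemma qPochInf_eq_one_sub_mul (a : ℂ) (hq : ‖q‖ < 1) :
    qPochInf a q = (1 - a) * qPochInf (a * q) q := by
  have h := tprod_eq_zero_mul' (f := fun h : ℕ => 1 - a * q ^ h)
    (by simpa only [pow_succ', mul_assoc] using multipliable_one_sub_mul_pow (a * q) hq)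
  simpa only [qPochInf, pow_succ', mul_assoc, pow_zero, mul_one] using h

lemma qPochInf_eq_qPoch_mul (a : ℂ) (hq : ‖q‖ < 1) (n : ℕ) :
    qPochInf a q = qPoch a q n * qPochInf (a * q ^ n) q := by
  induction n with
  | zero => rw [qPoch_zero, one_mul, pow_zero, mul_one]
  | succ n ih => rw [ih, qPochInf_eq_one_sub_mul (a * q ^ n) hq, qPoch_succ, pow_succ]; ring_nf

lemma qPochInf_one (hq : ‖q‖ < 1) : qPochInf 1 q = 0 := by
  rw [qPochInf_eq_one_sub_mul 1 hq, sub_self, zero_mul]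

lemma qPochInf_ne_zero {a : ℂ} (ha : ‖a‖ < 1) (hq : ‖q‖ < 1) : qPochInf a q ≠ 0 := by
  simpa only [qPochInf, sub_eq_add_neg] using
    tprod_one_add_ne_zero_of_summable (f := fun h : ℕ => -(a * q ^ h))
      (fun h => by simpa only [sub_eq_add_neg] using one_sub_mul_pow_ne_zero ha hq h)
      (summable_norm_neg_mul_pow a hq)

lemma prod_one_add_mul_pow_le_exp {a r : ℝ} (ha : 0 ≤ a) (hr0 : 0 ≤ r) (hr : r < 1) (n : ℕ) :
    ∏ h ∈ Finset.range n, (1 + a * r ^ h) ≤ Real.exp (a / (1 - r)) := by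
  have hs := (summable_geometric_of_lt_one hr0 hr).mul_left a
  calc ∏ h ∈ Finset.range n, (1 + a * r ^ h)
      ≤ ∏ h ∈ Finset.range n, Real.exp (a * r ^ h) :=
        Finset.prod_le_prod (fun _ _ => by positivity) fun h _ => by
          rw [add_comm]; exact Real.add_one_le_exp _
    _ = Real.exp (∑ h ∈ Finset.range n, a * r ^ h) := (Real.exp_sum _ _).symm
    _ ≤ Real.exp (a / (1 - r)) := by
        rw [div_eq_mul_inv, ← tsum_geometric_of_lt_one hr0 hr, ← tsum_mul_left]
        exact Real.exp_le_exp.mpr (hs.sum_le_tsum _ fun _ _ => by positivity)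

lemma norm_qPoch_le {a : ℂ} {R : ℝ} (ha : ‖a‖ ≤ R) (hq : ‖q‖ < 1) (n : ℕ) :
    ‖qPoch a q n‖ ≤ Real.exp (R / (1 - ‖q‖)) := by
  refine le_trans ?_
    (prod_one_add_mul_pow_le_exp ((norm_nonneg a).trans ha) (norm_nonneg q) hq n)
  rw [qPoch, norm_prod]
  refine Finset.prod_le_prod (fun _ _ => norm_nonneg _) fun h _ => ?_
  calc ‖1 - a * q ^ h‖ ≤ 1 + ‖a‖ * ‖q‖ ^ h := by
        simpa only [norm_one, norm_mul, norm_pow] using norm_sub_le 1 (a * q ^ h)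
    _ ≤ 1 + R * ‖q‖ ^ h := by gcongr

lemma norm_qPochInf_le {a : ℂ} {R : ℝ} (ha : ‖a‖ ≤ R) (hq : ‖q‖ < 1) :
    ‖qPochInf a q‖ ≤ Real.exp (R / (1 - ‖q‖)) :=
  le_of_tendsto' (tendsto_qPoch a hq).norm (norm_qPoch_le ha hq)

lemma exists_norm_inv_qPoch_le {a : ℂ} (ha : ‖a‖ < 1) (hq : ‖q‖ < 1) :
    ∃ K, ∀ n, ‖(qPoch a q n)⁻¹‖ ≤ K := by
  obtain ⟨K, hK⟩ :=
    ((tendsto_qPoch a hq).inv₀ (qPochInf_ne_zero ha hq)).norm.bddAbove_range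
  exact ⟨K, fun n => hK ⟨n, rfl⟩⟩

lemma tendsto_mul_pow_zero (z : ℂ) (hq : ‖q‖ < 1) :
    Tendsto (fun n : ℕ => z * q ^ n) atTop (𝓝 0) := by
  simpa using (tendsto_pow_atTop_nhds_zero_of_norm_lt_one hq).const_mul z

lemma eq_qPochInf_mul_of_eq_one_sub_mul (hq : ‖q‖ < 1) {f : ℂ → ℂ} (hf : ContinuousAt f 0)
    (h : ∀ z, f z = (1 - z) * f (z * q)) (z : ℂ) : f z = qPochInf z q * f 0 := by
  have iterate (n : ℕ) : f z = qPoch z q n * f (z * q ^ n) := by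
    induction n with
    | zero => rw [qPoch_zero, one_mul, pow_zero, mul_one]
    | succ n ih => rw [ih, h (z * q ^ n), qPoch_succ, pow_succ]; ring_nf
  have limit := (tendsto_qPoch z hq).mul (hf.tendsto.comp (tendsto_mul_pow_zero z hq))
  exact tendsto_nhds_unique (tendsto_const_nhds.congr iterate) limit

/-! ### Series with Gaussian decay -/

lemma choose_two_succ (n : ℕ) : (n + 1).choose 2 = n + n.choose 2 := by
  rw [Nat.choose_succ_left n 2 two_pos, Nat.choose_one_right]

lemma summable_pow_choose_two_mul_pow {𝕜 : Type*} [NormedField 𝕜] [CompleteSpace 𝕜] {r : 𝕜}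
    (hr : ‖r‖ < 1) (z : 𝕜) : Summable fun n : ℕ => r ^ n.choose 2 * z ^ n := by
  have h0 : Tendsto (fun n : ℕ => ‖r ^ n * z‖) atTop (𝓝 0) := by
    simpa using ((tendsto_pow_atTop_nhds_zero_of_norm_lt_one hr).mul_const z).norm
  refine summable_of_ratio_norm_eventually_le one_half_lt_one ?_
  filter_upwards [h0.eventually_le_const one_half_pos] with n hn
  calc ‖r ^ (n + 1).choose 2 * z ^ (n + 1)‖
      = ‖r ^ n * z‖ * ‖r ^ n.choose 2 * z ^ n‖ := by
        rw [← norm_mul, choose_two_succ]; ring_nf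
    _ ≤ 1 / 2 * ‖r ^ n.choose 2 * z ^ n‖ := by gcongr

/-- A sequence of functions is *Gaussian bounded* with base `q` if on every ball its `n`-th term is
at most `K |q|^(n choose 2) r ^ n`. This is the common reason why the series below converge to
functions continuous on the whole space. -/
def GaussianBounded {E : Type*} [SeminormedAddCommGroup E] (q : ℂ) (f : ℕ → E → ℂ) : Prop :=
  ∀ R : ℝ, ∃ K r : ℝ, ∀ n x, ‖x‖ ≤ R → ‖f n x‖ ≤ K * (‖q‖ ^ n.choose 2 * r ^ n)

namespace GaussianBounded

variable {E : Type*} [SeminormedAddCommGroup E] {f : ℕ → E → ℂ}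

lemma exists_summable_bound (hf : GaussianBounded q f) (hq : ‖q‖ < 1) (R : ℝ) :
    ∃ u : ℕ → ℝ, Summable u ∧ ∀ n x, ‖x‖ ≤ R → ‖f n x‖ ≤ u n := by
  obtain ⟨K, r, hK⟩ := hf R
  exact ⟨_, (summable_pow_choose_two_mul_pow (by rwa [norm_norm]) r).mul_left K, hK⟩

lemma summable (hf : GaussianBounded q f) (hq : ‖q‖ < 1) (x : E) : Summable (f · x) := by
  obtain ⟨u, hu, hfu⟩ := hf.exists_summable_bound hq ‖x‖
  exact .of_norm_bounded hu fun n => hfu n x le_rfl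

lemma continuous_tsum (hf : GaussianBounded q f) (hq : ‖q‖ < 1) (hc : ∀ n, Continuous (f n)) :
    Continuous fun x => ∑' n, f n x := by
  refine continuous_iff_continuousAt.mpr fun x => ?_
  obtain ⟨u, hu, hfu⟩ := hf.exists_summable_bound hq (‖x‖ + 1)
  have hx : ∀ᶠ y in 𝓝 x, ‖y‖ ≤ ‖x‖ + 1 :=
    continuous_norm.continuousAt.eventually_le_const (lt_add_one _)
  exact (continuousOn_tsum (fun n => (hc n).continuousOn) hu hfu).continuousAt hx

end GaussianBounded

/-! ### Euler's expansion -/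

/-- The `n`-th term of Euler's expansion of `(z; q)_∞` in powers of `z`. -/
noncomputable def eulerTerm (q : ℂ) (n : ℕ) (z : ℂ) : ℂ :=
  (-1) ^ n * q ^ n.choose 2 * z ^ n / qPoch q q n

lemma gaussianBounded_eulerTerm (hq : ‖q‖ < 1) : GaussianBounded q (eulerTerm q) := by
  obtain ⟨K, hK⟩ := exists_norm_inv_qPoch_le hq hq
  have hK0 : 0 ≤ K := (norm_nonneg _).trans (hK 0)
  refine fun R => ⟨K, R, fun n z hz => ?_⟩
  calc ‖eulerTerm q n z‖ = ‖(qPoch q q n)⁻¹‖ * (‖q‖ ^ n.choose 2 * ‖z‖ ^ n) := by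
        simp only [eulerTerm, div_eq_mul_inv, norm_mul, norm_pow, norm_neg, norm_one, one_pow]
        ring
    _ ≤ K * (‖q‖ ^ n.choose 2 * R ^ n) := by
        gcongr; exact hK n

lemma eulerTerm_succ (hq : ‖q‖ < 1) (n : ℕ) (z : ℂ) :
    eulerTerm q (n + 1) z = eulerTerm q (n + 1) (z * q) - z * eulerTerm q n (z * q) := by
  have h1 := qPoch_ne_zero hq hq n
  have h2 := one_sub_mul_pow_ne_zero hq hq n
  simp only [eulerTerm, qPoch_succ, choose_two_succ]
  field_simp
  ring

theorem tsum_eulerTerm (hq : ‖q‖ < 1) (z : ℂ) : ∑' n, eulerTerm q n z = qPochInf z q := by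
  have hs := (gaussianBounded_eulerTerm hq).summable hq
  have hcont : Continuous fun z => ∑' n, eulerTerm q n z :=
    (gaussianBounded_eulerTerm hq).continuous_tsum hq fun n => by unfold eulerTerm; fun_prop
  have hstep (z : ℂ) : ∑' n, eulerTerm q n z = (1 - z) * ∑' n, eulerTerm q n (z * q) := by
    have h0 : eulerTerm q 0 z = eulerTerm q 0 (z * q) := by simp [eulerTerm]
    rw [(hs z).tsum_eq_zero_add, tsum_congr (eulerTerm_succ hq · z),
      ((summable_nat_add_iff 1).mpr (hs _)).tsum_sub ((hs _).mul_left z), tsum_mul_left, h0,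
      ← add_sub_assoc, ← (hs _).tsum_eq_zero_add]
    ring
  have hzero : ∑' n, eulerTerm q n 0 = 1 := by
    rw [tsum_eq_single 0 fun n hn => by simp [eulerTerm, hn]]
    simp [eulerTerm, qPoch_zero]
  rw [eq_qPochInf_mul_of_eq_one_sub_mul hq hcont.continuousAt hstep z, hzero, mul_one]

lemma continuous_qPochInf (hq : ‖q‖ < 1) : Continuous fun a => qPochInf a q := by
  simp only [← tsum_eulerTerm hq]
  exact (gaussianBounded_eulerTerm hq).continuous_tsum hq fun n => by unfold eulerTerm; fun_prop

/-! ### The Jacobi triple product -/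

/-- The `n`-th term of the two-sided theta series with nome `p = x * y`: it is
`(-1)^n p^(n choose 2) y^n`, where for `n < 0` the power `p^(n choose 2) y^n` is written
`p^(|n| choose 2) x^|n|`, so that no division by `y` is needed. -/
noncomputable def thetaTerm (x y : ℂ) (n : ℤ) : ℂ :=
  (-1) ^ n.natAbs * (x * y) ^ n.natAbs.choose 2 * (x ^ (-n).toNat * y ^ n.toNat)

lemma thetaTerm_natCast (x y : ℂ) (n : ℕ) :
    thetaTerm x y n = (-1) ^ n * (x * y) ^ n.choose 2 * y ^ n := by
  simp [thetaTerm]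

lemma thetaTerm_neg_natCast (x y : ℂ) (n : ℕ) :
    thetaTerm x y (-n) = (-1) ^ n * (x * y) ^ n.choose 2 * x ^ n := by
  simp [thetaTerm]

lemma mul_pow_mul_thetaTerm_add_one (x y : ℂ) (N : ℕ) {n : ℤ} (hn : 0 ≤ N + 1 + n) :
    x * (x * y) ^ N * thetaTerm x y (n + 1) =
      -((x * y) ^ (N + 1 + n).toNat * thetaTerm x y n) := by
  obtain ⟨m, rfl | rfl⟩ : ∃ m : ℕ, n = m ∨ n = -(m + 1 : ℕ) := by
    rcases n with m | m
    exacts [⟨m, .inl rfl⟩, ⟨m, .inr rfl⟩]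
  · rw [show (N + 1 + m : ℤ).toNat = N + 1 + m by omega,
      show (m + 1 : ℤ) = (m + 1 : ℕ) by push_cast; rfl, thetaTerm_natCast, thetaTerm_natCast,
      choose_two_succ]
    ring
  · obtain ⟨l, rfl⟩ : ∃ l, N = l + m := ⟨N - m, by omega⟩
    rw [show ((l + m : ℕ) + 1 + -((m + 1 : ℕ) : ℤ)).toNat = l by omega,
      show -((m + 1 : ℕ) : ℤ) + 1 = -(m : ℕ) by push_cast; ring, thetaTerm_neg_natCast,
      thetaTerm_neg_natCast, choose_two_succ]
    ring

lemma summable_norm_thetaTerm {x y : ℂ} (h : ‖x * y‖ < 1) :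
    Summable fun n => ‖thetaTerm x y n‖ := by
  have bound (z : ℂ) : Summable fun n : ℕ => ‖(-1) ^ n * (x * y) ^ n.choose 2 * z ^ n‖ := by
    simpa only [norm_mul, norm_pow, norm_neg, norm_one, one_pow, one_mul] using
      summable_pow_choose_two_mul_pow (r := ‖x‖ * ‖y‖) (by simpa using h) ‖z‖
  refine .of_nat_of_neg_add_one (by simpa only [thetaTerm_natCast] using bound y) ?_
  refine ((summable_nat_add_iff 1).mpr (bound x)).congr fun n => ?_
  rw [← thetaTerm_neg_natCast, Nat.cast_add_one]

/-- The symbol `(q^m; q)_∞` for an integer `m`. The truncation `toNat` is harmless for `m ≤ 0`,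
where it gives `(1; q)_∞ = 0`: for `m < 0` this is what continuing the product would give. -/
noncomputable def qPochInfPow (q : ℂ) (m : ℤ) : ℂ := qPochInf (q ^ m.toNat) q

lemma qPochInfPow_of_nonpos (hq : ‖q‖ < 1) {m : ℤ} (hm : m ≤ 0) : qPochInfPow q m = 0 := by
  rw [qPochInfPow, Int.toNat_of_nonpos hm, pow_zero, qPochInf_one hq]

lemma qPochInfPow_eq_one_sub_mul (hq : ‖q‖ < 1) {m : ℤ} (hm : 0 ≤ m) :
    qPochInfPow q m = (1 - q ^ m.toNat) * qPochInfPow q (m + 1) := by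
  rw [qPochInfPow, qPochInfPow, Int.toNat_add hm zero_le_one, Int.toNat_one, pow_succ]
  exact qPochInf_eq_one_sub_mul _ hq

lemma norm_qPochInfPow_le (hq : ‖q‖ < 1) (m : ℤ) :
    ‖qPochInfPow q m‖ ≤ Real.exp (1 / (1 - ‖q‖)) := by
  refine norm_qPochInf_le ?_ hq
  rw [norm_pow]
  exact pow_le_one₀ (norm_nonneg _) hq.le

lemma tendsto_qPochInfPow (hq : ‖q‖ < 1) : Tendsto (qPochInfPow q) atTop (𝓝 1) := by
  have htoNat : Tendsto Int.toNat atTop atTop :=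
    tendsto_atTop.mpr fun b => (eventually_ge_atTop (b : ℤ)).mono fun _ _ => by omega
  have hpow := (tendsto_pow_atTop_nhds_zero_of_norm_lt_one hq).comp htoNat
  rw [← qPochInf_zero q]
  exact ((continuous_qPochInf hq).tendsto 0).comp hpow

/-- The theta series with its `n`-th term multiplied by `(p^(N + 1 + n); p)_∞`. This cuts off the
terms with `n < -N`, and the multiplier tends to `1` as `N` grows. -/
noncomputable def truncatedTheta (x y : ℂ) (N : ℕ) : ℂ :=
  ∑' n : ℤ, thetaTerm x y n * qPochInfPow (x * y) (N + 1 + n)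

lemma norm_thetaTerm_mul_qPochInfPow_le {x y : ℂ} (h : ‖x * y‖ < 1) (m n : ℤ) :
    ‖thetaTerm x y n * qPochInfPow (x * y) m‖ ≤
      ‖thetaTerm x y n‖ * Real.exp (1 / (1 - ‖x * y‖)) := by
  rw [norm_mul]
  gcongr
  exact norm_qPochInfPow_le h m

lemma truncatedTheta_zero {x y : ℂ} (h : ‖x * y‖ < 1) :
    truncatedTheta x y 0 = qPochInf (x * y) (x * y) * qPochInf y (x * y) := by
  have hsupp : Function.support (fun n : ℤ => thetaTerm x y n *
      qPochInfPow (x * y) ((0 : ℕ) + 1 + n)) ⊆ Set.range ((↑) : ℕ → ℤ) := by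
    refine Function.support_subset_iff'.mpr fun n hn => ?_
    have hneg : n < 0 := not_le.mp fun h0 => hn ⟨n.toNat, Int.toNat_of_nonneg h0⟩
    rw [qPochInfPow_of_nonpos h (by omega), mul_zero]
  rw [truncatedTheta, ← Nat.cast_injective.tsum_eq hsupp, ← tsum_eulerTerm h y, ← tsum_mul_left]
  refine tsum_congr fun n => ?_
  rw [thetaTerm_natCast, eulerTerm, qPochInf_eq_qPoch_mul (x * y) h n, qPochInfPow,
    show (((0 : ℕ) : ℤ) + 1 + n).toNat = n + 1 by omega, pow_succ']
  have := qPoch_ne_zero h h n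
  field_simp

lemma thetaTerm_mul_qPochInfPow_add_one {x y : ℂ} (h : ‖x * y‖ < 1) (N : ℕ) (n : ℤ) :
    thetaTerm x y n * qPochInfPow (x * y) (N + 1 + (n + 1)) =
      thetaTerm x y n * qPochInfPow (x * y) (N + 1 + n) - x * (x * y) ^ N *
        (thetaTerm x y (n + 1) * qPochInfPow (x * y) (N + 1 + (n + 1))) := by
  rcases lt_or_ge (N + 1 + n : ℤ) 0 with hneg | hpos
  · rw [qPochInfPow_of_nonpos h (by omega), qPochInfPow_of_nonpos h hneg.le]
    ring
  · rw [qPochInfPow_eq_one_sub_mul h hpos, ← mul_assoc (x * (x * y) ^ N),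
      mul_pow_mul_thetaTerm_add_one x y N hpos, add_assoc (N + 1 : ℤ)]
    ring

lemma truncatedTheta_succ {x y : ℂ} (h : ‖x * y‖ < 1) (N : ℕ) :
    truncatedTheta x y (N + 1) = (1 - x * (x * y) ^ N) * truncatedTheta x y N := by
  set f : ℤ → ℂ := fun n => thetaTerm x y n * qPochInfPow (x * y) (N + 1 + n)
  have hf : Summable f := .of_norm_bounded ((summable_norm_thetaTerm h).mul_right _) fun n =>
    norm_thetaTerm_mul_qPochInfPow_le h _ n
  have hf' : Summable fun n => f (n + 1) := hf.comp_injective (add_left_injective (1 : ℤ))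
  calc truncatedTheta x y (N + 1)
      = ∑' n, thetaTerm x y n * qPochInfPow (x * y) (N + 1 + (n + 1)) :=
        tsum_congr fun n => by push_cast; ring_nf
    _ = ∑' n, f n - x * (x * y) ^ N * ∑' n, f (n + 1) := by
        rw [tsum_congr (thetaTerm_mul_qPochInfPow_add_one h N), hf.tsum_sub (hf'.mul_left _),
          tsum_mul_left]
    _ = ∑' n, f n - x * (x * y) ^ N * ∑' n, f n := by
        rw [← (Equiv.addRight (1 : ℤ)).tsum_eq f]; rfl
    _ = (1 - x * (x * y) ^ N) * truncatedTheta x y N := by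
        rw [truncatedTheta]; ring

lemma truncatedTheta_eq_qPoch_mul {x y : ℂ} (h : ‖x * y‖ < 1) (N : ℕ) :
    truncatedTheta x y N =
      qPoch x (x * y) N * (qPochInf (x * y) (x * y) * qPochInf y (x * y)) := by
  induction N with
  | zero => rw [truncatedTheta_zero h, qPoch_zero, one_mul]
  | succ N ih => rw [truncatedTheta_succ h, ih, qPoch_succ]; ring

lemma tendsto_truncatedTheta {x y : ℂ} (h : ‖x * y‖ < 1) :
    Tendsto (truncatedTheta x y) atTop (𝓝 (∑' n, thetaTerm x y n)) := by
  refine tendsto_tsum_of_dominated_convergence ((summable_norm_thetaTerm h).mul_right _)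
    (fun n => ?_) (.of_forall fun N n => norm_thetaTerm_mul_qPochInfPow_le h _ n)
  have hexp : Tendsto (fun N : ℕ => (N + 1 + n : ℤ)) atTop atTop :=
    tendsto_atTop_add_const_right _ _
      (tendsto_atTop_add_const_right _ _ tendsto_natCast_atTop_atTop)
  simpa only [Function.comp_def, mul_one] using
    ((tendsto_qPochInfPow h).comp hexp).const_mul (thetaTerm x y n)

theorem tsum_thetaTerm {x y : ℂ} (h : ‖x * y‖ < 1) :
    ∑' n, thetaTerm x y n =
      qPochInf x (x * y) * qPochInf y (x * y) * qPochInf (x * y) (x * y) := by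
  have hlim := ((tendsto_qPoch x h).mul_const _).congr
    fun N => (truncatedTheta_eq_qPoch_mul h N).symm
  rw [tendsto_nhds_unique (tendsto_truncatedTheta h) hlim]
  ring

/-! ### Selberg's functional system -/

/-- Selberg's functional equations for a family `f 0, …, f k` of functions of `x`, together with
the normalisation that makes a solution unique. -/
structure IsSelbergSystem (k : ℕ) (q : ℂ) (f : ℕ → ℂ → ℂ) : Prop where
  zero : ∀ x, f 0 x = 0
  succ : ∀ i < k, ∀ x, f (i + 1) x = f i x + (1 - x * q) * (x * q) ^ i * f (k - i) (x * q)
  continuousAt : ∀ i ≤ k, ContinuousAt (f i) 0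
  apply_zero : ∀ i < k, f (i + 1) 0 = 1

lemma sum_pow_le_one_add_pow {r : ℝ} (hr : 0 ≤ r) (n : ℕ) :
    ∑ l ∈ Finset.range n, r ^ l ≤ (1 + r) ^ n := by
  induction n with
  | zero => simp
  | succ n ih =>
    calc ∑ l ∈ Finset.range (n + 1), r ^ l = r * ∑ l ∈ Finset.range n, r ^ l + 1 := geom_sum_succ
      _ ≤ r * (1 + r) ^ n + (1 + r) ^ n := by
        gcongr; exact one_le_pow₀ (by linarith)
      _ = (1 + r) ^ (n + 1) := by ring

lemma norm_le_one_add_pow_mul_of_succ {k : ℕ} {z : ℂ} {d e : ℕ → ℂ} (h0 : d 0 = 0)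
    (hd : ∀ i < k, d (i + 1) = d i + (1 - z) * z ^ i * e (k - i)) {M : ℝ}
    (he : ∀ i ≤ k, ‖e i‖ ≤ M) {i : ℕ} (hi : i ≤ k) : ‖d i‖ ≤ (1 + ‖z‖) ^ (k + 1) * M := by
  have hM : 0 ≤ M := (norm_nonneg _).trans (he 0 k.zero_le)
  have partial_sum : ‖d i‖ ≤ (1 + ‖z‖) * (∑ l ∈ Finset.range i, ‖z‖ ^ l) * M := by
    induction i with
    | zero => simp [h0]
    | succ i ih =>
      have hz : ‖1 - z‖ ≤ 1 + ‖z‖ := by simpa only [norm_one] using norm_sub_le 1 z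
      calc ‖d (i + 1)‖ ≤ ‖d i‖ + ‖1 - z‖ * ‖z‖ ^ i * ‖e (k - i)‖ := by
            rw [hd i hi, ← norm_pow, ← norm_mul, ← norm_mul]
            exact norm_add_le _ _
        _ ≤ (1 + ‖z‖) * (∑ l ∈ Finset.range i, ‖z‖ ^ l) * M + (1 + ‖z‖) * ‖z‖ ^ i * M := by
            gcongr
            exacts [ih (by omega), he _ (by omega)]
        _ = (1 + ‖z‖) * (∑ l ∈ Finset.range (i + 1), ‖z‖ ^ l) * M := by
            rw [Finset.sum_range_succ]; ring
  calc ‖d i‖ ≤ (1 + ‖z‖) * (∑ l ∈ Finset.range i, ‖z‖ ^ l) * M := partial_sum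
    _ ≤ (1 + ‖z‖) * (1 + ‖z‖) ^ i * M := by
        gcongr; exact sum_pow_le_one_add_pow (norm_nonneg z) i
    _ ≤ (1 + ‖z‖) ^ (k + 1) * M := by
        rw [← pow_succ']
        gcongr
        linarith [norm_nonneg z]

lemma nonpos_of_le_mul_of_tendsto_zero {u c : ℕ → ℝ} {C : ℝ} (hc : ∀ m, 0 ≤ c m)
    (hC : ∀ m, ∏ l ∈ Finset.range m, c l ≤ C) (hu : ∀ m, 0 ≤ u m)
    (hstep : ∀ m, u m ≤ c m * u (m + 1)) (hlim : Tendsto u atTop (𝓝 0)) : u 0 ≤ 0 := by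
  have iterate (m : ℕ) : u 0 ≤ (∏ l ∈ Finset.range m, c l) * u m := by
    induction m with
    | zero => simp
    | succ m ih =>
      rw [Finset.prod_range_succ, mul_assoc]
      exact ih.trans (mul_le_mul_of_nonneg_left (hstep m) (Finset.prod_nonneg fun l _ => hc l))
  have hCu : Tendsto (fun m => C * u m) atTop (𝓝 0) := by
    simpa only [mul_zero] using hlim.const_mul C
  exact ge_of_tendsto' hCu fun m => (iterate m).trans (mul_le_mul_of_nonneg_right (hC m) (hu m))

lemma prod_one_add_norm_pow_le (hq : ‖q‖ < 1) (z : ℂ) (k m : ℕ) :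
    ∏ l ∈ Finset.range m, (1 + ‖z * q ^ l‖) ^ k ≤ Real.exp (‖z‖ / (1 - ‖q‖)) ^ k := by
  rw [Finset.prod_pow]
  refine pow_le_pow_left₀ (Finset.prod_nonneg fun _ _ => by positivity) ?_ k
  simpa only [norm_mul, norm_pow] using
    prod_one_add_mul_pow_le_exp (norm_nonneg z) (norm_nonneg q) hq m

namespace IsSelbergSystem

variable {k : ℕ} {f g : ℕ → ℂ → ℂ}

lemma tendsto_sub (hf : IsSelbergSystem k q f) (hg : IsSelbergSystem k q g) (hq : ‖q‖ < 1)
    {i : ℕ} (hi : i ≤ k) (x : ℂ) :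
    Tendsto (fun m : ℕ => f i (x * q ^ m) - g i (x * q ^ m)) atTop (𝓝 0) := by
  have hzero : f i 0 = g i 0 := by
    cases i with
    | zero => rw [hf.zero, hg.zero]
    | succ i => rw [hf.apply_zero i hi, hg.apply_zero i hi]
  rw [← sub_eq_zero.mpr hzero]
  exact ((hf.continuousAt i hi).sub (hg.continuousAt i hi)).tendsto.comp
    (tendsto_mul_pow_zero x hq)

/-- Going from `x` to `x * q`, the difference of two solutions grows by a factor whose infinite
product converges, whereas it tends to `0` along `x * q ^ m`. -/
theorem eq (hf : IsSelbergSystem k q f) (hg : IsSelbergSystem k q g) (hq : ‖q‖ < 1) {i : ℕ}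
    (hi : i ≤ k) (x : ℂ) : f i x = g i x := by
  let d (m : ℕ) (i : Fin (k + 1)) : ℂ := f i (x * q ^ m) - g i (x * q ^ m)
  have hlim : Tendsto d atTop (𝓝 0) :=
    tendsto_pi_nhds.mpr fun i => hf.tendsto_sub hg hq (Nat.lt_succ_iff.mp i.2) x
  have hstep (m : ℕ) : ‖d m‖ ≤ (1 + ‖x * q * q ^ m‖) ^ (k + 1) * ‖d (m + 1)‖ := by
    refine (pi_norm_le_iff_of_nonneg (by positivity)).mpr fun i => ?_
    have hx : x * q ^ (m + 1) = x * q ^ m * q := by rw [pow_succ, mul_assoc]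
    refine norm_le_one_add_pow_mul_of_succ (d := fun i => f i (x * q ^ m) - g i (x * q ^ m))
      (e := fun i => f i (x * q ^ (m + 1)) - g i (x * q ^ (m + 1))) ?_ (fun i hi => ?_)
      (fun i hi => norm_le_pi_norm (d (m + 1)) ⟨i, Nat.lt_succ_iff.mpr hi⟩)
      (Nat.lt_succ_iff.mp i.2)
    · rw [hf.zero, hg.zero, sub_zero]
    · rw [hf.succ i hi, hg.succ i hi, hx, mul_right_comm x q]
      ring
  have hd := nonpos_of_le_mul_of_tendsto_zero (fun _ => by positivity)
    (prod_one_add_norm_pow_le hq (x * q) (k + 1)) (fun _ => norm_nonneg _) hstep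
    (tendsto_zero_iff_norm_tendsto_zero.mp hlim)
  have hd0 : d 0 = 0 := norm_le_zero_iff.mp hd
  simpa only [d, pow_zero, mul_one, Pi.zero_apply, sub_eq_zero] using
    congrFun hd0 ⟨i, Nat.lt_succ_iff.mpr hi⟩

end IsSelbergSystem

/-! ### The theta side -/

/-- The terms of the series of which Selberg's theta functions are combinations. The index `n` comes
before `x` to match `GaussianBounded`. -/
noncomputable def selbergTerm (k : ℕ) (q : ℂ) (j n : ℕ) (x : ℂ) : ℂ :=
  (-1) ^ n * x ^ (k * n) * q ^ ((2 * k + 1) * n.choose 2 + j * n) *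
    (qPoch (x * q) q n / qPoch q q n)

/-- The well-poised series in which the contiguous relations are expressed. -/
noncomputable def selbergSeries (k : ℕ) (q : ℂ) (j : ℕ) (x : ℂ) : ℂ := ∑' n, selbergTerm k q j n x

/-- Selberg's solution of his functional system, which at `x = 1` becomes a theta series. The
subtraction `2 * k + 1 - i` is only meaningful for `i ≤ 2 * k + 1`. -/
noncomputable def selbergTheta (k : ℕ) (q : ℂ) (i : ℕ) (x : ℂ) : ℂ :=
  selbergSeries k q (2 * k + 1 - i) x - (x * q) ^ i * selbergSeries k q (2 * k + 1 + i) x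

lemma gaussianBounded_selbergTerm (k j : ℕ) (hq : ‖q‖ < 1) :
    GaussianBounded q (selbergTerm k q j) := by
  intro R
  obtain ⟨K, hK⟩ := exists_norm_inv_qPoch_le hq hq
  have hK0 : 0 ≤ K := (norm_nonneg _).trans (hK 0)
  refine ⟨Real.exp (R / (1 - ‖q‖)) * K, R ^ k, fun n x hx => ?_⟩
  have hpoch : ‖qPoch (x * q) q n‖ ≤ Real.exp (R / (1 - ‖q‖)) := by
    refine norm_qPoch_le ?_ hq n
    rw [norm_mul]
    exact (mul_le_of_le_one_right (norm_nonneg x) hq.le).trans hx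
  have hexp : n.choose 2 ≤ (2 * k + 1) * n.choose 2 + j * n := by nlinarith
  calc ‖selbergTerm k q j n x‖
      = ‖qPoch (x * q) q n‖ * ‖(qPoch q q n)⁻¹‖ *
          (‖q‖ ^ ((2 * k + 1) * n.choose 2 + j * n) * (‖x‖ ^ k) ^ n) := by
        simp only [selbergTerm, div_eq_mul_inv, norm_mul, norm_pow, norm_neg, norm_one, one_pow,
          pow_mul]
        ring
    _ ≤ Real.exp (R / (1 - ‖q‖)) * K * (‖q‖ ^ n.choose 2 * (R ^ k) ^ n) := by
        gcongr ?_ * ?_ * (?_ * ?_ ^ n)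
        exacts [hK n, pow_le_pow_of_le_one (norm_nonneg q) hq.le hexp, by gcongr]

lemma summable_selbergTerm (k j : ℕ) (hq : ‖q‖ < 1) (x : ℂ) :
    Summable fun n => selbergTerm k q j n x :=
  (gaussianBounded_selbergTerm k j hq).summable hq x

lemma continuous_selbergSeries (k j : ℕ) (hq : ‖q‖ < 1) : Continuous (selbergSeries k q j) :=
  (gaussianBounded_selbergTerm k j hq).continuous_tsum hq fun n => by
    unfold selbergTerm qPoch; fun_prop

lemma selbergSeries_zero {k : ℕ} (hk : k ≠ 0) (q : ℂ) (j : ℕ) : selbergSeries k q j 0 = 1 := by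
  rw [selbergSeries, tsum_eq_single 0 fun n hn => by simp [selbergTerm, hk, hn]]
  simp [selbergTerm, qPoch_zero]

lemma one_sub_mul_qPoch_mul (a q : ℂ) (n : ℕ) :
    (1 - a) * qPoch (a * q) q n = qPoch a q n * (1 - a * q ^ n) := by
  rw [← qPoch_succ', qPoch_succ]

lemma selbergSeries_sub_mul (k j : ℕ) (hq : ‖q‖ < 1) (x : ℂ) :
    selbergSeries k q (j + k) x - x * q * selbergSeries k q (j + k + 1) x =
      (1 - x * q) * selbergSeries k q j (x * q) := by
  have hs (j : ℕ) := summable_selbergTerm k j hq x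
  simp only [selbergSeries, ← tsum_mul_left]
  rw [← (hs _).tsum_sub ((hs _).mul_left _)]
  refine tsum_congr fun n => ?_
  unfold selbergTerm
  linear_combination -((-1) ^ n * (x * q) ^ (k * n) *
    q ^ ((2 * k + 1) * n.choose 2 + j * n) / qPoch q q n) * one_sub_mul_qPoch_mul (x * q) q n

lemma selbergSeries_sub (k j : ℕ) (hq : ‖q‖ < 1) (x : ℂ) :
    selbergSeries k q j x - selbergSeries k q (j + 1) x =
      -(x ^ k * q ^ j * (1 - x * q) * selbergSeries k q (j + k + 1) (x * q)) := by
  have hs (j : ℕ) := summable_selbergTerm k j hq x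
  have hsub := (hs j).sub (hs (j + 1))
  have h0 : selbergTerm k q j 0 x - selbergTerm k q (j + 1) 0 x = 0 := by simp [selbergTerm]
  simp only [selbergSeries, ← tsum_mul_left, ← tsum_neg]
  rw [← (hs j).tsum_sub (hs (j + 1)), hsub.tsum_eq_zero_add, h0, zero_add]
  refine tsum_congr fun n => ?_
  have h1 := qPoch_ne_zero hq hq n
  have h2 := one_sub_mul_pow_ne_zero hq hq n
  simp only [selbergTerm, qPoch_succ' (x * q), qPoch_succ q, choose_two_succ]
  field_simp
  ring

theorem isSelbergSystem_selbergTheta (k : ℕ) (hq : ‖q‖ < 1) :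
    IsSelbergSystem k q (selbergTheta k q) where
  zero x := by simp [selbergTheta]
  succ i hi x := by
    obtain ⟨d, rfl⟩ := Nat.exists_eq_add_of_lt hi
    have lower := selbergSeries_sub (i + d + 1) (i + 2 * d + 2) hq x
    have upper := selbergSeries_sub_mul (i + d + 1) (2 * i + d + 2) hq x
    simp only [selbergTheta, show i + d + 1 - i = d + 1 by omega,
      show 2 * (i + d + 1) + 1 - (i + 1) = i + 2 * d + 2 by omega,
      show 2 * (i + d + 1) + 1 - i = i + 2 * d + 2 + 1 by omega,
      show 2 * (i + d + 1) + 1 + i = 2 * i + d + 2 + (i + d + 1) by omega,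
      show 2 * (i + d + 1) + 1 + (i + 1) = 2 * i + d + 2 + (i + d + 1) + 1 by omega,
      show 2 * (i + d + 1) + 1 - (d + 1) = 2 * i + d + 2 by omega,
      show 2 * (i + d + 1) + 1 + (d + 1) = i + 2 * d + 2 + (i + d + 1) + 1 by omega]
    linear_combination lower + (x * q) ^ i * upper
  continuousAt i _ := by
    have h (j : ℕ) := continuous_selbergSeries k j hq
    exact ((h _).sub ((by fun_prop : Continuous fun x => (x * q) ^ i).mul (h _))).continuousAt
  apply_zero i hi := by
    simp [selbergTheta, selbergSeries_zero (Nat.ne_zero_of_lt hi)]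

lemma selbergTerm_one (hq : ‖q‖ < 1) (k j n : ℕ) : selbergTerm k q j n 1 =
    (-1) ^ n * (q ^ (2 * k + 1)) ^ n.choose 2 * (q ^ j) ^ n := by
  rw [selbergTerm, one_mul, div_self (qPoch_ne_zero hq hq n)]
  ring

theorem selbergTheta_one (k : ℕ) {i : ℕ} (hi : i ≤ 2 * k + 1) (hq : ‖q‖ < 1) :
    selbergTheta k q i 1 =
      qPochInf (q ^ i) (q ^ (2 * k + 1)) * qPochInf (q ^ (2 * k + 1 - i)) (q ^ (2 * k + 1)) *
        qPochInf (q ^ (2 * k + 1)) (q ^ (2 * k + 1)) := by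
  have hmul : q ^ i * q ^ (2 * k + 1 - i) = q ^ (2 * k + 1) := by
    rw [← pow_add, Nat.add_sub_cancel' hi]
  have hlt : ‖q ^ i * q ^ (2 * k + 1 - i)‖ < 1 := by
    rw [hmul, norm_pow]
    exact pow_lt_one₀ (norm_nonneg q) hq (by omega)
  have hneg (n : ℕ) : thetaTerm (q ^ i) (q ^ (2 * k + 1 - i)) (-(n + 1)) =
      -(q ^ i * selbergTerm k q (2 * k + 1 + i) n 1) := by
    rw [← Nat.cast_add_one, thetaTerm_neg_natCast, hmul, selbergTerm_one hq, choose_two_succ]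
    ring
  have hnat (n : ℕ) : thetaTerm (q ^ i) (q ^ (2 * k + 1 - i)) n =
      selbergTerm k q (2 * k + 1 - i) n 1 := by
    rw [thetaTerm_natCast, hmul, selbergTerm_one hq]
  have hs (j : ℕ) := summable_selbergTerm k j hq 1
  have triple := tsum_thetaTerm hlt
  rw [hmul] at triple
  rw [← triple, tsum_of_nat_of_neg_add_one]
  · simp only [hnat, hneg, tsum_neg, tsum_mul_left, selbergTheta, selbergSeries, one_mul,
      sub_eq_add_neg]
  · simpa only [hnat] using hs _
  · simpa only [hneg] using ((hs _).mul_left _).neg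

/-! ### The sum side -/

/-- The `j`-th term of the Rogers–Selberg sum, with two free parameters `p = (a, x)`. -/
noncomputable def rogersTerm (q : ℂ) (j : ℕ) (p : ℂ × ℂ) : ℂ :=
  q ^ (2 * j ^ 2) * p.1 ^ j * qPochInf (-(p.2 * q ^ (2 * j + 1))) q / qPoch (q ^ 2) (q ^ 2) j

/-- The two-parameter Rogers–Selberg sum. All the functions of Selberg's system are obtained from
it by letting `a` be `x ^ 2` or `(x * q) ^ 2`. -/
noncomputable def rogersSeries (q a x : ℂ) : ℂ := ∑' j, rogersTerm q j (a, x)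

lemma norm_sq_lt_one (hq : ‖q‖ < 1) : ‖q ^ 2‖ < 1 := by
  rw [norm_pow]
  exact pow_lt_one₀ (norm_nonneg q) hq two_ne_zero

lemma gaussianBounded_rogersTerm (hq : ‖q‖ < 1) : GaussianBounded q (rogersTerm q) := by
  intro R
  obtain ⟨K, hK⟩ := exists_norm_inv_qPoch_le (norm_sq_lt_one hq) (norm_sq_lt_one hq)
  have hK0 : 0 ≤ K := (norm_nonneg _).trans (hK 0)
  refine ⟨Real.exp (R / (1 - ‖q‖)) * K, R, fun j p hp => ?_⟩
  have hpoch : ‖qPochInf (-(p.2 * q ^ (2 * j + 1))) q‖ ≤ Real.exp (R / (1 - ‖q‖)) := by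
    refine norm_qPochInf_le ?_ hq
    rw [norm_neg, norm_mul, norm_pow]
    exact (mul_le_of_le_one_right (norm_nonneg _) (pow_le_one₀ (norm_nonneg q) hq.le)).trans
      ((norm_snd_le p).trans hp)
  have hexp : j.choose 2 ≤ 2 * j ^ 2 := by
    have := Nat.choose_le_pow j 2
    omega
  calc ‖rogersTerm q j p‖
      = ‖qPochInf (-(p.2 * q ^ (2 * j + 1))) q‖ * ‖(qPoch (q ^ 2) (q ^ 2) j)⁻¹‖ *
          (‖q‖ ^ (2 * j ^ 2) * ‖p.1‖ ^ j) := by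
        simp only [rogersTerm, div_eq_mul_inv, norm_mul, norm_pow]
        ring
    _ ≤ Real.exp (R / (1 - ‖q‖)) * K * (‖q‖ ^ j.choose 2 * R ^ j) := by
        gcongr ?_ * ?_ * (?_ * ?_ ^ j)
        exacts [hK j, pow_le_pow_of_le_one (norm_nonneg q) hq.le hexp, (norm_fst_le p).trans hp]

lemma summable_rogersTerm (hq : ‖q‖ < 1) (a x : ℂ) : Summable fun j => rogersTerm q j (a, x) :=
  (gaussianBounded_rogersTerm hq).summable hq (a, x)

lemma continuous_rogersSeries (hq : ‖q‖ < 1) :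
    Continuous fun p : ℂ × ℂ => rogersSeries q p.1 p.2 :=
  (gaussianBounded_rogersTerm hq).continuous_tsum hq fun j => by
    have hpoch := continuous_qPochInf hq
    unfold rogersTerm
    fun_prop

lemma rogersSeries_zero_zero (q : ℂ) : rogersSeries q 0 0 = 1 := by
  rw [rogersSeries, tsum_eq_single 0 fun j hj => by simp [rogersTerm, hj]]
  simp [rogersTerm, qPoch_zero, qPochInf_zero]

lemma rogersSeries_eq_add_snd (hq : ‖q‖ < 1) (a x : ℂ) :
    rogersSeries q a x =
      rogersSeries q a (x * q) + x * q * rogersSeries q (a * q ^ 2) (x * q) := by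
  have hs := summable_rogersTerm hq
  simp only [rogersSeries, ← tsum_mul_left]
  rw [← (hs _ _).tsum_add ((hs _ _).mul_left _)]
  refine tsum_congr fun j => ?_
  simp only [rogersTerm, qPochInf_eq_one_sub_mul (-(x * q ^ (2 * j + 1))) hq,
    show -(x * q ^ (2 * j + 1)) * q = -(x * q * q ^ (2 * j + 1)) by ring]
  ring

lemma rogersSeries_eq_add_fst (hq : ‖q‖ < 1) (a x : ℂ) :
    rogersSeries q a x =
      rogersSeries q (a * q ^ 2) x + a * q ^ 2 * rogersSeries q (a * q ^ 4) (x * q ^ 2) := by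
  have hs := summable_rogersTerm hq
  have hsub := (hs a x).sub (hs (a * q ^ 2) x)
  have h0 : rogersTerm q 0 (a, x) - rogersTerm q 0 (a * q ^ 2, x) = 0 := by simp [rogersTerm]
  rw [← sub_eq_iff_eq_add']
  simp only [rogersSeries, ← tsum_mul_left]
  rw [← (hs _ _).tsum_sub (hs _ _), hsub.tsum_eq_zero_add, h0, zero_add]
  refine tsum_congr fun j => ?_
  have h1 := qPoch_ne_zero (norm_sq_lt_one hq) (norm_sq_lt_one hq) j
  have h2 := one_sub_mul_pow_ne_zero (norm_sq_lt_one hq) (norm_sq_lt_one hq) j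
  simp only [rogersTerm, qPoch_succ,
    show x * q ^ (2 * (j + 1) + 1) = x * q ^ 2 * q ^ (2 * j + 1) by ring]
  field_simp
  ring

lemma rogersSeries_sq_one (q : ℂ) : rogersSeries q (q ^ 2) 1 =
    ∑' j : ℕ, q ^ (2 * j ^ 2 + 2 * j) * qPochInf (-(q ^ (2 * j + 1))) q /
      qPoch (q ^ 2) (q ^ 2) j := by
  simp only [rogersSeries, rogersTerm, one_mul, ← pow_mul, ← pow_add]

/-- The solution of Selberg's system for `k = 3` built from the Rogers–Selberg sums; the index `3`
stands for all larger ones, which do not matter. -/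
noncomputable def selbergSum (q : ℂ) (i : ℕ) (x : ℂ) : ℂ :=
  match i with
  | 0 => 0
  | 1 => qPochInf (x * q) q * rogersSeries q ((x * q) ^ 2) (x * q)
  | 2 => qPochInf (x * q) q * rogersSeries q ((x * q) ^ 2) x
  | _ => qPochInf (x * q) q * rogersSeries q (x ^ 2) x

lemma continuous_qPochInf_mul_rogersSeries (hq : ‖q‖ < 1) {a b : ℂ → ℂ} (ha : Continuous a)
    (hb : Continuous b) : Continuous fun x => qPochInf (x * q) q * rogersSeries q (a x) (b x) := by
  have hpoch := continuous_qPochInf hq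
  have hseries := continuous_rogersSeries hq
  fun_prop

theorem isSelbergSystem_selbergSum (hq : ‖q‖ < 1) : IsSelbergSystem 3 q (selbergSum q) where
  zero _ := rfl
  succ i hi x := by
    have poch := qPochInf_eq_one_sub_mul (x * q) hq
    have snd := rogersSeries_eq_add_snd hq ((x * q) ^ 2) x
    have fst := rogersSeries_eq_add_fst hq (x ^ 2) x
    simp only [show x ^ 2 * q ^ 2 = (x * q) ^ 2 by ring,
      show x ^ 2 * q ^ 4 = (x * q * q) ^ 2 by ring,
      show (x * q) ^ 2 * q ^ 2 = (x * q * q) ^ 2 by ring, show x * q ^ 2 = x * q * q by ring]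
      at snd fst
    interval_cases i <;> simp only [Nat.reduceAdd, Nat.reduceSub, selbergSum]
    · linear_combination rogersSeries q ((x * q) ^ 2) (x * q) * poch
    · linear_combination qPochInf (x * q) q * snd +
        x * q * rogersSeries q ((x * q * q) ^ 2) (x * q) * poch
    · linear_combination qPochInf (x * q) q * fst +
        (x * q) ^ 2 * rogersSeries q ((x * q * q) ^ 2) (x * q * q) * poch
  continuousAt i hi := by
    have hcont {a b : ℂ → ℂ} (ha : Continuous a) (hb : Continuous b) :=
      (continuous_qPochInf_mul_rogersSeries hq ha hb).continuousAt (x := 0)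
    interval_cases i
    exacts [continuousAt_const, hcont (by fun_prop) (by fun_prop),
      hcont (by fun_prop) (by fun_prop), hcont (by fun_prop) (by fun_prop)]
  apply_zero i hi := by
    interval_cases i <;> simp [selbergSum, qPochInf_zero, rogersSeries_zero_zero]

/-! ### Products over residue classes -/

lemma multipliable_one_sub_pow (hq : ‖q‖ < 1) (s : Set ℕ) :
    Multipliable fun j : s => 1 - q ^ (j : ℕ) := by
  have hs : Summable fun j : s => ‖-(1 * q ^ (j : ℕ))‖ := (summable_norm_neg_mul_pow 1 hq).subtype s
  simpa only [one_mul, sub_eq_add_neg] using multipliable_one_add_of_summable hs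

lemma eq_of_modEq {a b d : ℕ} (ha : 0 < a) (had : a ≤ d) (hb : 0 < b) (hbd : b ≤ d)
    (h : a ≡ b [MOD d]) : a = b :=
  h.eq_of_abs_lt (by rw [abs_lt]; omega)

lemma setOf_modEq_eq_range {a d : ℕ} (ha : 0 < a) (had : a ≤ d) :
    {j | 0 < j ∧ j ≡ a [MOD d]} = Set.range fun h => a + d * h := by
  ext j
  constructor
  · rintro ⟨hj, hja⟩
    have haj : a ≤ j := by
      by_contra! hlt
      exact hlt.ne (eq_of_modEq hj (hlt.le.trans had) ha had hja)
    obtain ⟨h, hh⟩ := (Nat.modEq_iff_dvd' haj).mp hja.symm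
    exact ⟨h, show a + d * h = j by omega⟩
  · rintro ⟨h, rfl⟩
    exact ⟨by positivity, by simp [Nat.ModEq]⟩

lemma tprod_modEq {a d : ℕ} (ha : 0 < a) (had : a ≤ d) (q : ℂ) :
    ∏' j : {j | 0 < j ∧ j ≡ a [MOD d]}, (1 - q ^ (j : ℕ)) = qPochInf (q ^ a) (q ^ d) := by
  have hinj : Function.Injective fun h => a + d * h := fun h h' hh =>
    Nat.eq_of_mul_eq_mul_left (ha.trans_le had) (Nat.add_left_cancel hh)
  rw [tprod_congr_set_coe (fun j => 1 - q ^ j) (setOf_modEq_eq_range ha had),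
    tprod_range (fun j => 1 - q ^ j) hinj]
  simp only [qPochInf, pow_add, pow_mul]

lemma setOf_forall_not_modEq_eq_union {a d : ℕ} {A : Finset ℕ} (hA : A ⊆ Finset.Icc 1 d)
    (ha : a ∈ Finset.Icc 1 d) (haA : a ∉ A) :
    {j | 0 < j ∧ ∀ b ∈ A, ¬ j ≡ b [MOD d]} =
      {j | 0 < j ∧ ∀ b ∈ insert a A, ¬ j ≡ b [MOD d]} ∪ {j | 0 < j ∧ j ≡ a [MOD d]} := by
  ext j
  have hne (hja : j ≡ a [MOD d]) (b : ℕ) (hb : b ∈ A) : ¬ j ≡ b [MOD d] := fun hjb => by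
    obtain ⟨ha1, had⟩ := Finset.mem_Icc.mp ha
    obtain ⟨hb1, hbd⟩ := Finset.mem_Icc.mp (hA hb)
    rw [eq_of_modEq ha1 had hb1 hbd (hja.symm.trans hjb)] at haA
    exact haA hb
  simp only [Set.mem_ofPred_eq, Set.mem_union, Finset.forall_mem_insert]
  tauto

theorem tprod_not_modEq_mul_prod (hq : ‖q‖ < 1) {d : ℕ} {A : Finset ℕ} (hA : A ⊆ Finset.Icc 1 d) :
    (∏' j : {j | 0 < j ∧ ∀ a ∈ A, ¬ j ≡ a [MOD d]}, (1 - q ^ (j : ℕ))) *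
      ∏ a ∈ A, qPochInf (q ^ a) (q ^ d) = qPochInf q q := by
  induction A using Finset.induction_on with
  | empty =>
    have hset : {j : ℕ | 0 < j ∧ ∀ a ∈ (∅ : Finset ℕ), ¬ j ≡ a [MOD d]} =
        {j | 0 < j ∧ j ≡ 1 [MOD 1]} := by ext; simp [Nat.modEq_one]
    rw [tprod_congr_set_coe (fun j => 1 - q ^ j) hset, tprod_modEq one_pos le_rfl, pow_one,
      Finset.prod_empty, mul_one]
  | insert a A haA ih =>
    obtain ⟨ha, hA⟩ := Finset.insert_subset_iff.mp hA
    obtain ⟨ha1, had⟩ := Finset.mem_Icc.mp ha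
    have hdisj : Disjoint {j | 0 < j ∧ ∀ b ∈ insert a A, ¬ j ≡ b [MOD d]}
        {j | 0 < j ∧ j ≡ a [MOD d]} :=
      Set.disjoint_left.mpr fun j hj hja => hj.2 a (Finset.mem_insert_self a A) hja.2
    have hsplit := Multipliable.tprod_union_disjoint (f := fun j => 1 - q ^ j) hdisj
      (multipliable_one_sub_pow hq _) (multipliable_one_sub_pow hq _)
    rw [← setOf_forall_not_modEq_eq_union hA ha haA, tprod_modEq ha1 had] at hsplit
    rw [← ih hA, hsplit, Finset.prod_insert haA, mul_assoc]

theorem tprod_inv_not_modEq_mul (hq : ‖q‖ < 1) {d : ℕ} {A : Finset ℕ} (hA : A ⊆ Finset.Icc 1 d) :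
    (∏' j : {j | 0 < j ∧ ∀ a ∈ A, ¬ j ≡ a [MOD d]}, (1 - q ^ (j : ℕ))⁻¹) * qPochInf q q =
      ∏ a ∈ A, qPochInf (q ^ a) (q ^ d) := by
  have hprod := tprod_not_modEq_mul_prod hq hA
  have hne := left_ne_zero_of_mul (hprod.trans_ne (qPochInf_ne_zero hq hq))
  rw [(multipliable_one_sub_pow hq _).tprod_inv₀ hne, ← hprod, inv_mul_cancel_left₀ hne]

end RogersSelberg

open RogersSelberg

/-- The second Rogers–Selberg identity (mod 7). -/
theorem rogers_selberg_second (q : ℂ) (hq : ‖q‖ < 1) :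
    ∑' j : ℕ, q ^ (2 * j ^ 2 + 2 * j) * qPochInf (-(q ^ (2 * j + 1))) q / qPoch (q ^ 2) (q ^ 2) j =
      ∏' j : {j : ℕ // 0 < j ∧ j % 7 ≠ 0 ∧ j % 7 ≠ 2 ∧ j % 7 ≠ 5},
        (1 - q ^ (j : ℕ))⁻¹ := by
  have hA : ({2, 5, 7} : Finset ℕ) ⊆ Finset.Icc 1 7 := by decide
  have hresidues : {j | 0 < j ∧ j % 7 ≠ 0 ∧ j % 7 ≠ 2 ∧ j % 7 ≠ 5} =
      {j | 0 < j ∧ ∀ a ∈ ({2, 5, 7} : Finset ℕ), ¬ j ≡ a [MOD 7]} := by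
    ext j
    simp only [Nat.ModEq, Set.mem_ofPred_eq, Finset.forall_mem_insert, Finset.mem_singleton,
      forall_eq, Nat.reduceMod]
    tauto
  have hproduct := tprod_inv_not_modEq_mul hq hA
  rw [← tprod_congr_set_coe (fun j => (1 - q ^ j)⁻¹) hresidues, mul_comm] at hproduct
  refine mul_left_cancel₀ (qPochInf_ne_zero hq hq) ?_
  rw [← rogersSeries_sq_one]
  calc qPochInf q q * rogersSeries q (q ^ 2) 1
      = selbergSum q 2 1 := by simp only [selbergSum, one_mul]
    _ = selbergTheta 3 q 2 1 :=
        (isSelbergSystem_selbergSum hq).eq (isSelbergSystem_selbergTheta 3 hq) hq (by norm_num) 1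
    _ = ∏ a ∈ {2, 5, 7}, qPochInf (q ^ a) (q ^ 7) := by
        rw [selbergTheta_one 3 (by norm_num) hq]
        simp [mul_assoc]
    _ = _ := hproduct.symm
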